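/- The smallest non-empty set without tangents in PG(2,9) has exactly 15 points: there exists a set without tangents of size 15 in PG(2,9), and every non-empty set without tangents in PG(2,9) has at least 15 points. -/

import Mathlib

/-!
`PG(2,F)`: points are the 1-dimensional subspaces of `F^3` (modelled as the
projectivization of `Fin 3 → F`), lines are the 2-dimensional subspaces.
-/

variable {F : Type*} [Field F]

/-- The points of `PG(2,F)`: 1-dimensional subspaces of `F^3`. -/
abbrev PGPoint (F : Type*) [Field F] := Projectivization F (Fin 3 → F)

/-- A line of `PG(2,F)` is a 2-dimensional subspace of `F^3`. -/
def IsProjLine (F : Type*) [Field F] (L : Submodule F (Fin 3 → F)) : Prop :=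
  Module.finrank F L = 2

/-- The set of projective points lying on the subspace `L`. -/
def pointsOn (L : Submodule F (Fin 3 → F)) : Set (PGPoint F) :=
  {P | P.submodule ≤ L}

/-- `S` is a set without tangents: no line of `PG(2,F)` meets `S` in exactly one point. -/
def NoTangents (S : Set (PGPoint F)) : Prop :=
  ∀ L : Submodule F (Fin 3 → F), IsProjLine F L →
    ¬ (∃! P : PGPoint F, P ∈ S ∩ pointsOn L)

/-!
Let `S` be a non-empty set without tangents with fewer than `2q` points in a projective plane of
odd order `q`. Then some point of `S` is on two long secants, i.e. lines with at least three
points of `S`. Otherwise counting along the lines through a point of `S` shows that each point of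
`S` is on a unique long secant, and that all of these contain the same number `c = |S| - q` of
points of `S`; by parity, `c` is odd, and each of the `q + 1 - c` points outside `S` of a long
secant is on a second one. So there are more than `q + 1 - c` long secants, which are disjoint in
`S` and contain `c` points of it each: too many for `|S| = q + c`, as `3 ≤ c < q`.

For `q = 9` and a suitable `g ∈ F`, the recurrence `v (n + 3) = g • v (n + 1) + v n` started at
any basis runs through the points of the plane with period `91`, and the lines become the
translates of a perfect difference set modulo `91` (a Singer cycle). The points `0, 1, 3` and
`1, 2, 4` are collinear, so three points on each of two intersecting long secants can be taken to
be `0, 1, 2, 3, 4`.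

What remains is a finite search. If `A ⊆ S` and `t` tangents of `A` meet in a point outside
`S \ A`, then `S` has at least `t` points outside `A`, and if it has exactly `t` then these lie on
the `t` tangents. This prunes a branching over the points of a tangent of `A`. Sets are stored as
numbers in base `32`, so that one multiplication counts the points of a set on all lines at once.
-/

namespace TangentFree

open Finset

section Packing

variable {n : ℕ}

/-- The number whose `i`-th base-`32` digit is `c i`: a packed vector of `5`-bit counters. -/
def pack (c : Fin n → ℕ) : ℕ := ∑ i, c i * 32 ^ (i : ℕ)

/-- The packed indicator function of a set: the digit `i` is `1` if `i ∈ s`, otherwise `0`. -/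
def packSet (s : Finset (Fin n)) : ℕ := pack fun i => if i ∈ s then 1 else 0

theorem pack_lt {c : Fin n → ℕ} (hc : ∀ i, c i < 32) : pack c < 32 ^ n :=
  (finFunctionFinEquiv fun i => ⟨c i, hc i⟩).isLt

theorem pack_div_mod {c : Fin n → ℕ} (hc : ∀ i, c i < 32) (i : Fin n) :
    pack c / 32 ^ (i : ℕ) % 32 = c i :=
  congrArg (fun f => (f i : ℕ)) (finFunctionFinEquiv.symm_apply_apply fun i => ⟨c i, hc i⟩)

theorem testBit_pack {c : Fin n → ℕ} (hc : ∀ i, c i < 32) (i : Fin n) {j : ℕ} (hj : j < 5) :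
    (pack c).testBit (j + 5 * i) = (c i).testBit j := by
  rw [← Nat.testBit_div_two_pow, pow_mul, show 2 ^ 5 = 32 by norm_num]
  conv_rhs => rw [← pack_div_mod hc i, show 32 = 2 ^ 5 by norm_num, Nat.testBit_mod_two_pow]
  simp [hj]

theorem testBit_pack_of_le {c : Fin n → ℕ} (hc : ∀ i, c i < 32) {k : ℕ} (hk : 5 * n ≤ k) :
    (pack c).testBit k = false := by
  refine Nat.testBit_eq_false_of_lt ((pack_lt hc).trans_le ?_)
  rw [show 32 = 2 ^ 5 by norm_num, ← pow_mul]
  exact Nat.pow_le_pow_right two_pos hk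

theorem eq_pack_of_testBit {x : ℕ} {c : Fin n → ℕ} (hc : ∀ i, c i < 32)
    (h : ∀ (i : Fin n), ∀ j < 5, x.testBit (j + 5 * i) = (c i).testBit j)
    (hx : ∀ k, 5 * n ≤ k → x.testBit k = false) : x = pack c := by
  refine Nat.eq_of_testBit_eq fun k => ?_
  obtain hk | hk := le_or_gt (5 * n) k
  · rw [hx k hk, testBit_pack_of_le hc hk]
  · have hmod : k % 5 < 5 := Nat.mod_lt k (by norm_num)
    have := h ⟨k / 5, Nat.div_lt_of_lt_mul hk⟩ (k % 5) hmod
    rwa [← testBit_pack hc _ hmod, Nat.mod_add_div] at this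

theorem indicator_lt (s : Finset (Fin n)) (i : Fin n) : (if i ∈ s then 1 else 0) < 32 := by
  split_ifs <;> norm_num

theorem testBit_packSet (s : Finset (Fin n)) (i : Fin n) {j : ℕ} (hj : j < 5) :
    (packSet s).testBit (j + 5 * i) = decide (j = 0 ∧ i ∈ s) := by
  rw [packSet, testBit_pack (indicator_lt s) i hj]
  by_cases hi : i ∈ s
  · simp [hi, Bool.eq_iff_iff (b := decide _), Nat.testBit_one_eq_true_iff_self_eq_zero]
  · simp [hi]

theorem testBit_packSet_of_le (s : Finset (Fin n)) {k : ℕ} (hk : 5 * n ≤ k) :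
    (packSet s).testBit k = false :=
  testBit_pack_of_le (indicator_lt s) hk

theorem eq_packSet_of_testBit {x : ℕ} {s : Finset (Fin n)}
    (h : ∀ (i : Fin n), ∀ j < 5, x.testBit (j + 5 * i) = decide (j = 0 ∧ i ∈ s))
    (hx : ∀ k, 5 * n ≤ k → x.testBit k = false) : x = packSet s :=
  eq_pack_of_testBit (indicator_lt s) (fun i j hj => by
    rw [h i j hj, ← testBit_packSet s i hj, packSet, testBit_pack (indicator_lt s) i hj]) hx

theorem packSet_land_packSet (s t : Finset (Fin n)) :
    (packSet s).land (packSet t) = packSet (s ∩ t) := by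
  change packSet s &&& packSet t = _
  refine eq_packSet_of_testBit (fun i j hj => ?_) fun k hk => ?_
  · rw [Nat.testBit_and, testBit_packSet s i hj, testBit_packSet t i hj, Bool.eq_iff_iff]
    simp only [Bool.and_eq_true, decide_eq_true_eq, mem_inter]
    tauto
  · rw [Nat.testBit_and, testBit_packSet_of_le s hk, Bool.false_and]

theorem packSet_lor_packSet (s t : Finset (Fin n)) :
    (packSet s).lor (packSet t) = packSet (s ∪ t) := by
  change packSet s ||| packSet t = _
  refine eq_packSet_of_testBit (fun i j hj => ?_) fun k hk => ?_
  · rw [Nat.testBit_or, testBit_packSet s i hj, testBit_packSet t i hj, Bool.eq_iff_iff]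
    simp only [Bool.or_eq_true, decide_eq_true_eq, mem_union]
    tauto
  · rw [Nat.testBit_or, testBit_packSet_of_le s hk, testBit_packSet_of_le t hk, Bool.false_or]

theorem packSet_xor_packSet {s t : Finset (Fin n)} (hst : s ⊆ t) :
    (packSet t).xor (packSet s) = packSet (t \ s) := by
  change packSet t ^^^ packSet s = _
  refine eq_packSet_of_testBit (fun i j hj => ?_) fun k hk => ?_
  · rw [Nat.testBit_xor, testBit_packSet s i hj, testBit_packSet t i hj, Bool.eq_iff_iff]
    simp only [Bool.xor_iff_ne, ne_eq, decide_eq_decide, mem_sdiff, decide_eq_true_eq]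
    have := @hst i
    tauto
  · rw [Nat.testBit_xor, testBit_packSet_of_le s hk, testBit_packSet_of_le t hk, Bool.false_xor]

theorem packSet_eq_sum (s : Finset (Fin n)) : packSet s = ∑ i ∈ s, 32 ^ (i : ℕ) := by
  simp [packSet, pack, ite_mul]

theorem packSet_eq_zero {s : Finset (Fin n)} : packSet s = 0 ↔ s = ∅ := by
  simp [packSet_eq_sum, sum_eq_zero_iff, eq_empty_iff_forall_notMem]

-- The definitions on packed numbers call `Nat.add`, `Nat.land`, ... directly: the kernel evaluates
-- these functions natively on numerals.
/-- The packed set of the places where the packed counters `x`, all less than `16`, are at least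
`k`: adding `16 - k` sets the top bit of exactly these counters. -/
def atLeast (n k x : ℕ) : ℕ :=
  ((x.add ((Nat.sub 16 k).mul (packSet (univ : Finset (Fin n))))).shiftRight 4).land
    (packSet (univ : Finset (Fin n)))

theorem atLeast_pack {c : Fin n → ℕ} (hc : ∀ i, c i < 16) {k : ℕ} (hk : k ≤ 16) :
    atLeast n k (pack c) = packSet {i | k ≤ c i} := by
  have hc' (i : Fin n) : c i + (16 - k) < 32 := by have := hc i; omega
  have hadd : pack c + (16 - k) * packSet (univ : Finset (Fin n)) =
      pack fun i => c i + (16 - k) := by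
    simp [packSet_eq_sum, pack, add_mul, sum_add_distrib, mul_sum]
  have heq : atLeast n k (pack c) =
      (pack fun i => c i + (16 - k)) >>> 4 &&& packSet (univ : Finset (Fin n)) := by
    rw [← hadd]
    rfl
  refine eq_packSet_of_testBit (fun i j hj => ?_) fun l hl => ?_
  · rw [heq, Nat.testBit_and, testBit_packSet _ i hj, Nat.testBit_shiftRight]
    obtain rfl | hj0 := eq_or_ne j 0
    · rw [← add_assoc, testBit_pack hc' i (by norm_num), Nat.testBit_eq_decide_div_mod_eq,
        Bool.eq_iff_iff]
      have := hc' i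
      simp only [mem_univ, and_self, decide_true, Bool.and_true, decide_eq_true_eq,
        mem_filter_univ, true_and]
      omega
    · simp [hj0]
  · rw [heq, Nat.testBit_and, testBit_packSet_of_le _ hl, Bool.and_false]

/-- The lowest bit `2 ^ k` of a positive number, since `x - 1` changes no bit above it. -/
def lowBit (x : ℕ) : ℕ := x.sub (x.land (x.sub 1))

theorem lowBit_two_pow_mul_add (k t : ℕ) : lowBit (2 ^ (k + 1) * t + 2 ^ k) = 2 ^ k := by
  have hpos : 0 < 2 ^ k := Nat.two_pow_pos k
  have hlt : 2 ^ k < 2 ^ (k + 1) := Nat.pow_lt_pow_succ (by norm_num)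
  suffices (2 ^ (k + 1) * t + 2 ^ k) &&& (2 ^ (k + 1) * t + (2 ^ k - 1)) = 2 ^ (k + 1) * t by
    change _ - ((2 ^ (k + 1) * t + 2 ^ k) &&& (2 ^ (k + 1) * t + 2 ^ k - 1)) = _
    rw [Nat.add_sub_assoc hpos, this, Nat.add_sub_cancel_left]
  refine Nat.eq_of_testBit_eq fun j => ?_
  rw [Nat.testBit_and, Nat.testBit_two_pow_mul_add t hlt,
    Nat.testBit_two_pow_mul_add t ((Nat.sub_le _ _).trans_lt hlt), Nat.testBit_two_pow_mul]
  obtain hj | hj := lt_or_ge j (k + 1)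
  · rw [if_pos hj, if_pos hj, Nat.testBit_two_pow, Nat.testBit_two_pow_sub_one]
    simp only [hj.not_ge, decide_false, Bool.false_and, Bool.and_eq_false_iff,
      decide_eq_false_iff_not]
    omega
  · simp [hj, hj.not_gt]

theorem packSet_beq_zero (s : Finset (Fin n)) : (packSet s).beq 0 = decide (s = ∅) := by
  rw [Bool.eq_iff_iff, Nat.beq_eq, packSet_eq_zero, decide_eq_true_eq]

theorem exists_lowBit_packSet {s : Finset (Fin n)} (hs : s.Nonempty) :
    ∃ i ∈ s, lowBit (packSet s) = packSet {i} := by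
  have hne : packSet s ≠ 0 := packSet_eq_zero.not.2 hs.ne_empty
  obtain ⟨k, m, ⟨t, rfl⟩, hk⟩ := Nat.exists_eq_two_pow_mul_odd hne
  replace hk : packSet s = 2 ^ (k + 1) * t + 2 ^ k := by rw [hk]; ring
  have hbit : (packSet s).testBit k = true := by
    rw [hk, Nat.testBit_two_pow_mul_add t (Nat.pow_lt_pow_succ (by norm_num))]
    simp
  have hlt : k < 5 * n := by
    by_contra! h
    simp [testBit_packSet_of_le s h] at hbit
  have hmod : k % 5 < 5 := Nat.mod_lt k (by norm_num)
  let i : Fin n := ⟨k / 5, Nat.div_lt_of_lt_mul hlt⟩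
  have hki : k % 5 + 5 * (i : ℕ) = k := Nat.mod_add_div k 5
  rw [← hki, testBit_packSet s i hmod, decide_eq_true_eq] at hbit
  refine ⟨i, hbit.2, ?_⟩
  rw [hk, lowBit_two_pow_mul_add, packSet_eq_sum, sum_singleton, ← hki, hbit.1, zero_add, pow_mul]
  norm_num

/-- The convolution of two packed vectors, computed by a single multiplication since
`32 ^ n = 1` modulo `32 ^ n - 1`. -/
def cyclicConv (n x y : ℕ) : ℕ := (x.mul y).mod (32 ^ n - 1)

theorem pow_mul_pow_modEq (x y : Fin n) :
    32 ^ (x : ℕ) * 32 ^ (y : ℕ) ≡ 32 ^ ((x + y : Fin n) : ℕ) [MOD 32 ^ n - 1] := by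
  have hone : 32 ^ n ≡ 1 [MOD 32 ^ n - 1] := Nat.modEq_sub (Nat.one_le_pow' _ _)
  rw [← pow_add, Fin.val_add]
  conv_lhs => rw [← Nat.mod_add_div ((x : ℕ) + y) n, pow_add, pow_mul]
  simpa using (hone.pow _).mul_left _

theorem pack_lt_sub_one [NeZero n] {c : Fin n → ℕ} (hc : ∀ i, c i < 31) :
    pack c < 32 ^ n - 1 := by
  have hadd : pack c + packSet (univ : Finset (Fin n)) = pack fun i => c i + 1 := by
    simp [packSet, pack, add_mul, sum_add_distrib]
  have hpos : 0 < packSet (univ : Finset (Fin n)) :=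
    Nat.pos_of_ne_zero (packSet_eq_zero.not.2 univ_nonempty.ne_empty)
  have hlt : pack (fun i => c i + 1) < 32 ^ n := pack_lt fun i => Nat.succ_lt_succ (hc i)
  omega

theorem card_filter_sub_mem_le [NeZero n] (s t : Finset (Fin n)) (i : Fin n) :
    #{x ∈ s | i - x ∈ t} ≤ #t :=
  card_le_card_of_injOn (i - ·) (fun _ hx => (mem_filter.1 hx).2) sub_right_injective.injOn

theorem cyclicConv_packSet [NeZero n] {s t : Finset (Fin n)} (ht : #t < 31) :
    cyclicConv n (packSet s) (packSet t) = pack fun i => #{x ∈ s | i - x ∈ t} := by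
  have hsum : packSet s * packSet t ≡ pack fun i => #{x ∈ s | i - x ∈ t} [MOD 32 ^ n - 1] := by
    calc packSet s * packSet t = ∑ x ∈ s, ∑ y ∈ t, 32 ^ (x : ℕ) * 32 ^ (y : ℕ) := by
          rw [packSet_eq_sum, packSet_eq_sum, sum_mul_sum]
      _ ≡ ∑ x ∈ s, ∑ y ∈ t, 32 ^ ((x + y : Fin n) : ℕ) [MOD 32 ^ n - 1] :=
          Nat.ModEq.sum fun x _ => Nat.ModEq.sum fun y _ => pow_mul_pow_modEq x y
      _ = ∑ x ∈ s, ∑ i, if i - x ∈ t then 32 ^ (i : ℕ) else 0 := by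
          refine sum_congr rfl fun x _ => ?_
          rw [← sum_filter]
          refine sum_bij (fun y _ => x + y) ?_ ?_ ?_ ?_
          · simp
          · simp
          · intro i hi
            exact ⟨i - x, by simpa using hi, by simp⟩
          · simp
      _ = pack fun i => #{x ∈ s | i - x ∈ t} := by
          rw [sum_comm, pack]
          simp [← sum_filter]
  have hlt (i : Fin n) : #{x ∈ s | i - x ∈ t} < 31 := (card_filter_sub_mem_le s t i).trans_lt ht
  exact Nat.mod_eq_of_modEq hsum (pack_lt_sub_one hlt)

end Packing

section PartialLinearSpace

variable {ι α : Type*} [Fintype ι] [DecidableEq α] {ℓ : ι → Finset α} {A S : Finset α}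

/-- The lines of the family `ℓ` meeting `A` in exactly one point. -/
def tangents (ℓ : ι → Finset α) (A : Finset α) : Finset ι := {i | #(A ∩ ℓ i) = 1}

theorem exists_mem_sdiff_of_mem_tangents {i : ι} (hS : #(S ∩ ℓ i) ≠ 1) (hAS : A ⊆ S)
    (hi : i ∈ tangents ℓ A) : ∃ y ∈ S \ A, y ∈ ℓ i := by
  by_contra! h
  refine hS ((mem_filter_univ i).1 hi ▸ congrArg card (Subset.antisymm ?_ ?_))
  · intro y hy
    rw [mem_inter] at hy ⊢
    exact ⟨by_contra fun hyA => h y (mem_sdiff.2 ⟨hy.1, hyA⟩) hy.2, hy.2⟩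
  · exact inter_subset_inter_right hAS

/-- Distinct tangents of `A` through `p` contain distinct points of `S` outside `A`. -/
theorem card_add_card_tangents_le (hℓ : Pairwise fun i j => #(ℓ i ∩ ℓ j) ≤ 1)
    (hS : ∀ i, #(S ∩ ℓ i) ≠ 1) (hAS : A ⊆ S) {p : α} (hp : p ∈ S → p ∈ A) :
    #A + #{i ∈ tangents ℓ A | p ∈ ℓ i} ≤ #S := by
  have : Nonempty α := ⟨p⟩
  choose! y hy hyℓ using fun i => exists_mem_sdiff_of_mem_tangents (hS i) hAS
  have hinj : Set.InjOn y (({i ∈ tangents ℓ A | p ∈ ℓ i} : Finset ι) : Set ι) := by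
    intro i hi j hj hij
    rw [mem_coe, mem_filter] at hi hj
    by_contra hne
    have hyp : y i = p := card_le_one.1 (hℓ hne) _
      (mem_inter.2 ⟨hyℓ i hi.1, hij ▸ hyℓ j hj.1⟩) _ (mem_inter.2 ⟨hi.2, hj.2⟩)
    have hyS := mem_sdiff.1 (hy i hi.1)
    exact hyS.2 (hyp ▸ hp (hyp ▸ hyS.1))
  have hle := card_le_card_of_injOn y (fun i hi => hy i (mem_filter.1 hi).1) hinj
  have := card_sdiff_add_card_eq_card hAS
  omega

theorem mem_tangents_of_card_le (hℓ : Pairwise fun i j => #(ℓ i ∩ ℓ j) ≤ 1)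
    (hS : ∀ i, #(S ∩ ℓ i) ≠ 1) (hAS : A ⊆ S) {p y : α} (hp : p ∈ S → p ∈ A)
    (hle : #S ≤ #A + #{i ∈ tangents ℓ A | p ∈ ℓ i}) (hyS : y ∈ S) (hyA : y ∉ A) {i : ι}
    (hpi : p ∈ ℓ i) (hyi : y ∈ ℓ i) : i ∈ tangents ℓ A := by
  by_contra hi
  have hsub : ({j ∈ tangents ℓ A | p ∈ ℓ j} : Finset ι) ⊆
      {j ∈ tangents ℓ (insert y A) | p ∈ ℓ j} := by
    intro j hj
    rw [mem_filter] at hj ⊢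
    refine ⟨?_, hj.2⟩
    have hyj : y ∉ ℓ j := fun hyj => by
      have hne : i ≠ j := fun h => hi (h ▸ hj.1)
      have hpy : p = y := card_le_one.1 (hℓ hne) _ (mem_inter.2 ⟨hpi, hj.2⟩) _
        (mem_inter.2 ⟨hyi, hyj⟩)
      exact hyA (hpy ▸ hp (hpy ▸ hyS))
    rw [tangents, mem_filter_univ, insert_inter_of_notMem hyj]
    exact (mem_filter_univ j).1 hj.1
  have := card_add_card_tangents_le hℓ hS (insert_subset hyS hAS)
    (fun h => mem_insert_of_mem (hp h))
  have := card_le_card hsub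
  have := card_insert_of_notMem hyA
  omega

end PartialLinearSpace

section ProjectivePlane

open Configuration ProjectivePlane

variable {P L : Type*} [Membership P L] [∀ (p : P) (l : L), Decidable (p ∈ l)] {S : Finset P}

/-- `S` has no tangents, and each of its points is on at most one line with more than two points
of `S`. -/
structure IsThin (L : Type*) [Membership P L] [∀ (p : P) (l : L), Decidable (p ∈ l)]
    (S : Finset P) : Prop where
  ne_one (l : L) : #{q ∈ S | q ∈ l} ≠ 1
  eq_of_three_le {p : P} (hp : p ∈ S) {l m : L} (hl : p ∈ l) (hm : p ∈ m)
    (hl3 : 3 ≤ #{q ∈ S | q ∈ l}) (hm3 : 3 ≤ #{q ∈ S | q ∈ m}) : l = m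

theorem IsThin.three_le_of_odd (hS : IsThin L S) {l : L} (hl : Odd #{q ∈ S | q ∈ l}) :
    3 ≤ #{q ∈ S | q ∈ l} := by
  have := hS.ne_one l
  grind

variable [ProjectivePlane P L]

theorem sum_card_filter_mem_line [Fintype L] {p : P} (hp : p ∉ S) :
    ∑ l : L with p ∈ l, #{q ∈ S | q ∈ l} = #S := by
  refine (sum_card_bipartiteAbove_eq_sum_card_bipartiteBelow fun (l : L) (q : P) => q ∈ l).trans ?_
  rw [card_eq_sum_ones]
  refine sum_congr rfl fun q hq => card_eq_one.2 ?_
  obtain ⟨l, hl, hunique⟩ := HasLines.existsUnique_line P L p q (ne_of_mem_of_not_mem hq hp).symm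
  refine ⟨l, ext fun m => ?_⟩
  rw [mem_bipartiteBelow, mem_filter_univ, mem_singleton]
  exact ⟨hunique m, fun h => h ▸ hl⟩

theorem odd_card_iff_odd_card_odd_lines [Fintype L] {p : P} (hp : p ∉ S) :
    Odd #S ↔ Odd #{l : L | p ∈ l ∧ Odd #{q ∈ S | q ∈ l}} := by
  rw [← sum_card_filter_mem_line (L := L) hp, odd_sum_iff_odd_card_odd, filter_filter]

theorem IsThin.exists_ne_of_even [Finite L] (hS : IsThin L S) (heven : Even #S) {m : L}
    (hm : Odd #{q ∈ S | q ∈ m}) {x : P} (hx : x ∉ S) (hxm : x ∈ m) :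
    ∃ l ≠ m, x ∈ l ∧ 3 ≤ #{q ∈ S | q ∈ l} := by
  have := Fintype.ofFinite L
  rw [← Nat.not_odd_iff_even, odd_card_iff_odd_card_odd_lines (L := L) hx] at heven
  have hmem : m ∈ ({l : L | x ∈ l ∧ Odd #{q ∈ S | q ∈ l}} : Finset L) :=
    (mem_filter_univ m).2 ⟨hxm, hm⟩
  have hlt : 1 < #{l : L | x ∈ l ∧ Odd #{q ∈ S | q ∈ l}} := by
    have := card_pos.2 ⟨m, hmem⟩
    grind
  obtain ⟨l, hl, hne⟩ := exists_mem_ne hlt m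
  rw [mem_filter_univ] at hl
  exact ⟨l, hne, hl.1, hS.three_le_of_odd hl.2⟩

theorem card_lines_through [Finite P] [Fintype L] (p : P) : #{l : L | p ∈ l} = order P L + 1 := by
  rw [← lineCount_eq (L := L) p, lineCount, Nat.card_eq_fintype_card, Fintype.card_subtype]

theorem card_points_on [Fintype P] [Finite L] (l : L) : #{p : P | p ∈ l} = order P L + 1 := by
  rw [← pointCount_eq P l, pointCount, Nat.card_eq_fintype_card, Fintype.card_subtype]

theorem sum_card_filter_sub_two [Finite P] [Fintype L] (hS : ∀ l : L, #{q ∈ S | q ∈ l} ≠ 1)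
    {p : P} (hp : p ∈ S) :
    ∑ l : L with p ∈ l, (#{q ∈ S | q ∈ l} - 2) + order P L + 2 = #S := by
  classical
  have hsum := sum_card_filter_mem_line (L := L) (notMem_erase p S)
  have hterm (l : L) (hl : l ∈ ({l : L | p ∈ l} : Finset L)) :
      #{q ∈ S.erase p | q ∈ l} = (#{q ∈ S | q ∈ l} - 2) + 1 := by
    have hmem : p ∈ S.filter (· ∈ l) := mem_filter.2 ⟨hp, (mem_filter_univ l).1 hl⟩
    rw [filter_erase, card_erase_of_mem hmem]
    have := card_pos.2 ⟨p, hmem⟩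
    have := hS l
    omega
  rw [sum_congr rfl hterm, sum_add_distrib, ← card_eq_sum_ones, card_lines_through,
    card_erase_of_mem hp] at hsum
  have := card_pos.2 ⟨p, hp⟩
  omega

namespace IsThin

theorem card_eq [Finite P] [Finite L] (hS : IsThin L S) {p : P} (hp : p ∈ S) {l : L} (hl : p ∈ l) :
    #{q ∈ S | q ∈ l} = 2 ∨ 3 ≤ #{q ∈ S | q ∈ l} ∧ #{q ∈ S | q ∈ l} + order P L = #S := by
  have := Fintype.ofFinite L
  have hpos : 0 < #{q ∈ S | q ∈ l} := card_pos.2 ⟨p, mem_filter.2 ⟨hp, hl⟩⟩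
  have hone := hS.ne_one l
  obtain h2 | h3 : #{q ∈ S | q ∈ l} = 2 ∨ 3 ≤ #{q ∈ S | q ∈ l} := by omega
  · exact .inl h2
  · have hsum := sum_card_filter_sub_two hS.ne_one hp
    rw [sum_eq_single_of_mem l ((mem_filter_univ l).2 hl)] at hsum
    · right; omega
    · intro m hm hml
      by_contra hm0
      exact hml (hS.eq_of_three_le hp ((mem_filter_univ m).1 hm) hl (by omega) h3)

theorem exists_three_le [Finite P] [Finite L] (hS : IsThin L S) {p : P} (hp : p ∈ S)
    (hcard : #S ≠ order P L + 2) :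
    ∃ l : L, p ∈ l ∧ 3 ≤ #{q ∈ S | q ∈ l} := by
  have := Fintype.ofFinite L
  by_contra! h
  have hsum := sum_card_filter_sub_two hS.ne_one hp
  rw [sum_eq_zero fun l hl => by have := h l ((mem_filter_univ l).1 hl); omega] at hsum
  omega

theorem order_add_two_le [Finite P] [Finite L] (hS : IsThin L S) (hne : S.Nonempty) :
    order P L + 2 ≤ #S := by
  have := Fintype.ofFinite L
  obtain ⟨p, hp⟩ := hne
  have := sum_card_filter_sub_two hS.ne_one hp
  omega

theorem odd_card_sub_order [Finite P] [Finite L] (hS : IsThin L S) (hodd : Odd (order P L))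
    (hne : S.Nonempty) (hlt : #S < 2 * order P L) : Odd (#S - order P L) := by
  have := Fintype.ofFinite P
  have := Fintype.ofFinite L
  have hle := hS.order_add_two_le hne
  by_contra heven
  obtain ⟨p, hp⟩ : ∃ p, p ∉ S := by
    by_contra! h
    have := card_points P L
    rw [← card_univ, ← eq_univ_of_forall h] at this
    nlinarith
  have hoddS : Odd #S := by grind
  rw [odd_card_iff_odd_card_odd_lines (L := L) hp] at hoddS
  obtain ⟨l, hl⟩ := card_pos.1 hoddS.pos
  rw [mem_filter_univ] at hl
  obtain ⟨q, hq⟩ := card_pos.1 hl.2.pos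
  rw [mem_filter] at hq
  obtain h | h := hS.card_eq hq.1 hq.2 <;> grind

/-- Each point of `m` outside `S` is on a further long secant. -/
theorem lt_card_long_secants [Finite P] [Fintype L] (hS : IsThin L S) (heven : Even #S) {m : L}
    (hm : Odd #{q ∈ S | q ∈ m}) :
    order P L + 1 < #{q ∈ S | q ∈ m} + #{l : L | 3 ≤ #{q ∈ S | q ∈ l}} := by
  have := Fintype.ofFinite P
  classical
  have hout : #{x : P | x ∈ m ∧ x ∉ S} + #{q ∈ S | q ∈ m} = order P L + 1 := by
    rw [← card_points_on m,
      ← card_filter_add_card_filter_not (s := ({x : P | x ∈ m} : Finset P)) (· ∉ S)]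
    simp only [filter_filter, not_not]
    congr 2
    grind
  have hex (x : P) (hx : x ∈ ({x : P | x ∈ m ∧ x ∉ S} : Finset P)) :
      ∃ l ≠ m, x ∈ l ∧ 3 ≤ #{q ∈ S | q ∈ l} := by
    rw [mem_filter_univ] at hx
    exact hS.exists_ne_of_even heven hm hx.2 hx.1
  have : Nonempty L := ⟨m⟩
  choose! l hlm hxl hl3 using hex
  have hinj : Set.InjOn l (({x : P | x ∈ m ∧ x ∉ S} : Finset P) : Set P) := by
    intro x hx y hy hxy
    have hxm : x ∈ m := ((mem_filter_univ x).1 hx).1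
    have hym : y ∈ m := ((mem_filter_univ y).1 hy).1
    exact (Nondegenerate.eq_or_eq (hxl x hx) (hxy ▸ hxl y hy) hxm hym).resolve_right (hlm x hx)
  have hle := card_le_card_of_injOn (t := ({l : L | 3 ≤ #{q ∈ S | q ∈ l}} : Finset L).erase m) l
    (fun x hx => mem_erase.2 ⟨hlm x hx, (mem_filter_univ _).2 (hl3 x hx)⟩) hinj
  have hm3 : m ∈ ({l : L | 3 ≤ #{q ∈ S | q ∈ l}} : Finset L) :=
    (mem_filter_univ m).2 (hS.three_le_of_odd hm)
  have := card_erase_lt_of_mem hm3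
  omega

theorem mul_card_long_secants_le [Finite P] [Fintype L] (hS : IsThin L S) :
    (#S - order P L) * #{l : L | 3 ≤ #{q ∈ S | q ∈ l}} ≤ #S := by
  have := card_mul_le_card_mul (s := ({l : L | 3 ≤ #{q ∈ S | q ∈ l}} : Finset L)) (t := S)
    (m := #S - order P L) (n := 1) (fun l p => p ∈ l) ?_ ?_
  · rwa [mul_one, mul_comm] at this
  · intro l hl
    rw [mem_filter_univ] at hl
    obtain ⟨p, hp⟩ := card_pos.1 (by omega : 0 < #{q ∈ S | q ∈ l})
    rw [mem_filter] at hp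
    have := hS.card_eq hp.1 hp.2
    rw [bipartiteAbove]; omega
  · intro p hp
    refine card_le_one.2 fun l hl m hm => ?_
    rw [mem_bipartiteBelow, mem_filter_univ] at hl hm
    exact hS.eq_of_three_le hp hl.2 hm.2 hl.1 hm.1

theorem two_mul_order_le_card [Finite P] [Finite L] (hS : IsThin L S) (hodd : Odd (order P L))
    (hne : S.Nonempty) :
    2 * order P L ≤ #S := by
  have := Fintype.ofFinite L
  by_contra! hlt
  have hc := hS.odd_card_sub_order hodd hne hlt
  have hle := hS.order_add_two_le hne
  obtain ⟨p, hp⟩ := hne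
  obtain ⟨m, hpm, hm⟩ := hS.exists_three_le hp (by grind)
  have hcm : #{q ∈ S | q ∈ m} = #S - order P L := by
    have := hS.card_eq hp hpm
    omega
  have hlow := hS.lt_card_long_secants (by grind) (hcm ▸ hc)
  have hupp := hS.mul_card_long_secants_le
  obtain ⟨c, hc'⟩ : ∃ c, #S = order P L + c := ⟨_, (Nat.add_sub_of_le (by omega)).symm⟩
  simp only [hcm, hc', Nat.add_sub_cancel_left] at *
  nlinarith

end IsThin

theorem exists_two_long_secants [Finite P] [Finite L] (hodd : Odd (order P L)) (hne : S.Nonempty)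
    (hS : ∀ l : L, #{q ∈ S | q ∈ l} ≠ 1) (hlt : #S < 2 * order P L) :
    ∃ p ∈ S, ∃ l m : L, l ≠ m ∧ p ∈ l ∧ p ∈ m ∧
      3 ≤ #{q ∈ S | q ∈ l} ∧ 3 ≤ #{q ∈ S | q ∈ m} := by
  by_contra! h
  refine hlt.not_ge (IsThin.two_mul_order_le_card (L := L) ⟨hS, ?_⟩ hodd hne)
  intro p hp l m hl hm hl3 hm3
  by_contra hlm
  have := h p hp l m hlm hl hm hl3
  omega

end ProjectivePlane

section Search

/-- A perfect difference set modulo `91`: its translates are the lines of a plane of order `9`. -/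
def diffSet : Finset (Fin 91) := {1, 2, 4, 10, 28, 50, 57, 62, 78, 82}

/-- The line with index `m` of the cyclic plane on the integers modulo `91`. -/
def cyclicLine (m : Fin 91) : Finset (Fin 91) := {x | x - m ∈ diffSet}

theorem mem_cyclicLine {x m : Fin 91} : x ∈ cyclicLine m ↔ x - m ∈ diffSet := mem_filter_univ x

theorem card_cyclicLine (m : Fin 91) : #(cyclicLine m) = 10 := by
  revert m
  decide +kernel

theorem card_diffSet_inter_translate_le {t : Fin 91} (ht : t ≠ 0) :
    #{x ∈ diffSet | x - t ∈ diffSet} ≤ 1 := by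
  revert t
  decide +kernel

theorem pairwise_card_cyclicLine_inter_le :
    Pairwise fun i j => #(cyclicLine i ∩ cyclicLine j) ≤ 1 := by
  intro i j hij
  refine (card_le_card_of_injOn (· - i) (fun x hx => ?_)
    sub_left_injective.injOn).trans (card_diffSet_inter_translate_le (sub_ne_zero.2 hij.symm))
  rw [mem_coe, mem_inter, mem_cyclicLine, mem_cyclicLine] at hx
  simpa using hx

theorem cyclicLine_injective : Function.Injective cyclicLine := by
  intro i j hij
  by_contra hne
  have hle : #(cyclicLine i ∩ cyclicLine j) ≤ 1 := pairwise_card_cyclicLine_inter_le hne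
  rw [hij, inter_self, card_cyclicLine] at hle
  omega

/-- The points of `A`, or outside `R`, that lie on at least `b` lines of `T`. If `T` consists of
the tangents of `A`, a set without tangents between `A` and `R` has at least `b` further points
as soon as there is such a point. -/
def heavyPoints (b : ℕ) (A R T : Finset (Fin 91)) : Finset (Fin 91) :=
  {p | b ≤ #{m ∈ T | p ∈ cyclicLine m} ∧ (p ∈ R → p ∈ A)}

/-- The set `R` without the points outside `A` that are joined to a point of `H` by a line
outside `T`. -/
def prune (A R T H : Finset (Fin 91)) : Finset (Fin 91) :=
  A ∪ {x ∈ R | ∀ p ∈ H, ∀ m, p ∈ cyclicLine m → x ∈ cyclicLine m → m ∈ T}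

theorem heavyPoints_tangents_eq_empty {S A R : Finset (Fin 91)} {b : ℕ}
    (hS : ∀ m, #(S ∩ cyclicLine m) ≠ 1) (hAS : A ⊆ S) (hSR : S ⊆ R) (hcard : #S < #A + b) :
    heavyPoints b A R (tangents cyclicLine A) = ∅ := by
  refine filter_eq_empty_iff.2 fun p _ hp => ?_
  have := card_add_card_tangents_le pairwise_card_cyclicLine_inter_le hS hAS
    fun h => hp.2 (hSR h)
  omega

theorem subset_prune {S A R : Finset (Fin 91)} {b : ℕ} (hS : ∀ m, #(S ∩ cyclicLine m) ≠ 1)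
    (hAS : A ⊆ S) (hSR : S ⊆ R) (hcard : #S ≤ #A + b) :
    S ⊆ prune A R (tangents cyclicLine A) (heavyPoints b A R (tangents cyclicLine A)) := by
  intro x hx
  rw [prune, mem_union, or_iff_not_imp_left, mem_filter]
  refine fun hxA => ⟨hSR hx, fun p hp m hpm hxm => ?_⟩
  rw [heavyPoints, mem_filter_univ] at hp
  exact mem_tangents_of_card_le pairwise_card_cyclicLine_inter_le hS hAS
    (fun h => hp.2 (hSR h)) (hcard.trans (Nat.add_le_add_left hp.1 _)) hx hxA hpm hxm

theorem atLeast_cyclicConv {n : ℕ} [NeZero n] {k : ℕ} (hk : k ≤ 16) (s : Finset (Fin n))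
    {t : Finset (Fin n)} (ht : #t < 16) :
    atLeast n k (cyclicConv n (packSet s) (packSet t)) =
      packSet {i | k ≤ #{x ∈ s | i - x ∈ t}} := by
  rw [cyclicConv_packSet (ht.trans (by norm_num)), atLeast_pack (fun i => ?_) hk]
  exact (card_filter_sub_mem_le s t i).trans_lt ht

/-- The packed set of the points on at least `k` lines of the packed set `T`. -/
def packedRichPoints (k T : ℕ) : ℕ := atLeast 91 k (cyclicConv 91 T (packSet diffSet))

/-- The packed set of the lines containing at least `k` points of the packed set `A`. -/
def packedRichLines (k A : ℕ) : ℕ :=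
  atLeast 91 k (cyclicConv 91 A (packSet {x : Fin 91 | -x ∈ diffSet}))

/-- The packed set of the tangents of the packed set `A`. -/
def packedTangents (A : ℕ) : ℕ := (packedRichLines 1 A).xor (packedRichLines 2 A)

/-- The counterpart of `heavyPoints` for packed sets. -/
def packedHeavyPoints (b A R T : ℕ) : ℕ :=
  (packedRichPoints b T).land (A.lor ((packSet (univ : Finset (Fin 91))).xor R))

/-- `f x`, evaluated only after `x` has been reduced to a numeral. -/
def force {α : Type*} (x : ℕ) (f : ℕ → α) : α :=
  match x with
  | 0 => f 0
  | k + 1 => f (k + 1)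

theorem force_eq {α : Type*} (x : ℕ) (f : ℕ → α) : force x f = f x := by
  cases x <;> rfl

/-- The counterpart of `prune` for packed sets. -/
def packedPrune (A R T H : ℕ) : ℕ :=
  force (packedRichLines 1 H) fun l =>
  A.lor (R.xor (R.land (packedRichPoints 1 (l.xor (l.land T)))))

/-- The packed set of the points of `R` outside `A` on the lowest line of the packed set `T`. -/
def packedCandidates (A R T : ℕ) : ℕ := (packedRichPoints 1 (lowBit T)).land (R.xor A)

theorem packedRichPoints_packSet {k : ℕ} (hk : k ≤ 16) (T : Finset (Fin 91)) :
    packedRichPoints k (packSet T) = packSet {x | k ≤ #{m ∈ T | x ∈ cyclicLine m}} := by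
  simp only [mem_cyclicLine]
  exact atLeast_cyclicConv hk T (by decide)

theorem packedRichLines_packSet {k : ℕ} (hk : k ≤ 16) (A : Finset (Fin 91)) :
    packedRichLines k (packSet A) = packSet {m | k ≤ #(A ∩ cyclicLine m)} := by
  have h (x m : Fin 91) :
      x ∈ cyclicLine m ↔ m - x ∈ ({y | -y ∈ diffSet} : Finset (Fin 91)) := by
    rw [mem_filter_univ, neg_sub, mem_cyclicLine]
  simp only [← filter_mem_eq_inter, h]
  exact atLeast_cyclicConv hk A (by decide)

theorem packedTangents_packSet (A : Finset (Fin 91)) :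
    packedTangents (packSet A) = packSet (tangents cyclicLine A) := by
  rw [packedTangents, packedRichLines_packSet (by norm_num),
    packedRichLines_packSet (by norm_num),
    packSet_xor_packSet (monotone_filter_right _ fun i _ h => (by norm_num : 1 ≤ 2).trans h)]
  congr 1
  ext m
  simp only [mem_sdiff, mem_filter_univ, tangents]
  omega

theorem packedHeavyPoints_packSet {b : ℕ} (hb : b ≤ 16) (A R T : Finset (Fin 91)) :
    packedHeavyPoints b (packSet A) (packSet R) (packSet T) = packSet (heavyPoints b A R T) := by
  rw [packedHeavyPoints, packedRichPoints_packSet hb, packSet_xor_packSet (subset_univ R),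
    packSet_lor_packSet, packSet_land_packSet]
  congr 1
  ext p
  simp only [heavyPoints, mem_inter, mem_filter_univ, mem_union, mem_sdiff, mem_univ, true_and]
  tauto

theorem packedPrune_packSet (A R T H : Finset (Fin 91)) :
    packedPrune (packSet A) (packSet R) (packSet T) (packSet H) = packSet (prune A R T H) := by
  rw [packedPrune, force_eq, packedRichLines_packSet (by norm_num), packSet_land_packSet,
    packSet_xor_packSet inter_subset_left, packedRichPoints_packSet (by norm_num),
    packSet_land_packSet, packSet_xor_packSet inter_subset_left, packSet_lor_packSet, prune]
  congr 2
  ext x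
  simp only [sdiff_inter_self_left, mem_sdiff, mem_filter, mem_univ, true_and,
    Nat.one_le_iff_ne_zero, ne_eq, card_eq_zero, ← disjoint_iff_inter_eq_empty, disjoint_left,
    filter_eq_empty_iff]
  refine and_congr_right fun _ => ?_
  push Not
  constructor
  · exact fun h p hp m hpm hxm => by_contra fun hm => h ⟨⟨p, hp, hpm⟩, hm⟩ hxm
  · exact fun h m ⟨⟨p, hp, hpm⟩, hm⟩ hxm => hm (h p hp m hpm hxm)

theorem exists_packedCandidates_eq {S A R : Finset (Fin 91)}
    (hS : ∀ m, #(S ∩ cyclicLine m) ≠ 1) (hAS : A ⊆ S) (hSR : S ⊆ R)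
    (hT : (tangents cyclicLine A).Nonempty) :
    ∃ C ⊆ R \ A, C.Nonempty ∧ packedCandidates (packSet A) (packSet R)
      (packSet (tangents cyclicLine A)) = packSet C := by
  obtain ⟨m, hm, hlow⟩ := exists_lowBit_packSet hT
  obtain ⟨y, hy, hym⟩ := exists_mem_sdiff_of_mem_tangents (hS m) hAS hm
  refine ⟨({x | 1 ≤ #{l ∈ {m} | x ∈ cyclicLine l}} : Finset (Fin 91)) ∩ (R \ A),
    inter_subset_right, ⟨y, ?_⟩, ?_⟩
  · rw [mem_inter, mem_filter_univ, one_le_card]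
    exact ⟨⟨m, by simpa using hym⟩, sdiff_subset_sdiff hSR Subset.rfl hy⟩
  · rw [packedCandidates, hlow, packedRichPoints_packSet (by norm_num),
      packSet_xor_packSet (hAS.trans hSR), packSet_land_packSet]

/-- A certificate, when it returns `true`, that no set without tangents consists of the packed
set `A` and at most `b` further points of the packed set `R`. The first argument bounds the
depth of the recursion, which branches on whether a candidate on a tangent of `A` belongs to the
set. -/
def search : ℕ → ℕ → ℕ → ℕ → Bool
  | 0, _, _, _ => false
  | k + 1, b, A, R =>
    force (packedTangents A) fun T =>
    bif T.beq 0 then false else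
    bif (packedHeavyPoints (b + 1) A R T).beq 0 then
      force (packedPrune A R T (packedHeavyPoints b A R T)) fun R' =>
      force (packedCandidates A R' T) fun C =>
      bif C.beq 0 then true else
      force (lowBit C) fun x => search k b A (R'.xor x) && search k (b.sub 1) (A.lor x) R'
    else true

theorem search_succ (k b A R : ℕ) : search (k + 1) b A R =
    let T := packedTangents A
    let R' := packedPrune A R T (packedHeavyPoints b A R T)
    let C := packedCandidates A R' T
    bif T.beq 0 then false else
    bif (packedHeavyPoints (b + 1) A R T).beq 0 then
      bif C.beq 0 then true else
      search k b A (R'.xor (lowBit C)) && search k (b.sub 1) (A.lor (lowBit C)) R'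
    else true := by
  rw [search]
  simp only [force_eq]

theorem search_eq_false {S : Finset (Fin 91)} (hS : ∀ m, #(S ∩ cyclicLine m) ≠ 1) (k : ℕ) :
    ∀ {b : ℕ} {A R : Finset (Fin 91)}, b < 16 → A ⊆ S → S ⊆ R → #S ≤ #A + b →
      search k b (packSet A) (packSet R) = false := by
  induction k with
  | zero => intros; rfl
  | succ k ih =>
    intro b A R hb hAS hSR hcard
    have hheavy := heavyPoints_tangents_eq_empty (b := b + 1) hS hAS hSR (by omega)
    have hSR' := subset_prune hS hAS hSR hcard
    rw [search_succ]
    dsimp only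
    rw [packedTangents_packSet, packSet_beq_zero, packedHeavyPoints_packSet hb.le,
      packedPrune_packSet, packedHeavyPoints_packSet hb, hheavy, packSet_beq_zero,
      decide_eq_true rfl, cond_true]
    obtain hT | hT := (tangents cyclicLine A).eq_empty_or_nonempty
    · rw [decide_eq_true hT, cond_true]
    obtain ⟨C, hCsub, hCne, hC⟩ := exists_packedCandidates_eq hS hAS hSR' hT
    obtain ⟨x, hx, hxlow⟩ := exists_lowBit_packSet hCne
    obtain ⟨hxR, hxA⟩ := mem_sdiff.1 (hCsub hx)
    rw [hC, packSet_beq_zero, hxlow, packSet_xor_packSet (singleton_subset_iff.2 hxR),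
      packSet_lor_packSet, decide_eq_false hT.ne_empty, decide_eq_false hCne.ne_empty,
      cond_false, cond_false, Bool.and_eq_false_iff]
    by_cases hxS : x ∈ S
    · right
      refine ih ((Nat.sub_le b 1).trans_lt hb)
        (union_subset hAS (singleton_subset_iff.2 hxS)) hSR' ?_
      have hcardA := card_union_of_disjoint (disjoint_singleton_right.2 hxA)
      have hlt : #A < #S := card_lt_card ⟨hAS, fun h => hxA (h hxS)⟩
      rw [hcardA, card_singleton, Nat.sub_eq]
      omega
    · left
      exact ih hb hAS (subset_sdiff.2 ⟨hSR', disjoint_singleton_right.2 hxS⟩) hcard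

theorem search_eq_true :
    search 91 9 (packSet ({0, 1, 2, 3, 4} : Finset (Fin 91)))
      (packSet (univ : Finset (Fin 91))) = true := by
  decide +kernel

theorem fifteen_le_card_of_subset {T : Finset (Fin 91)} (hT : ∀ m, #(T ∩ cyclicLine m) ≠ 1)
    (hsub : {0, 1, 2, 3, 4} ⊆ T) : 15 ≤ #T := by
  by_contra! hlt
  have hle : #T ≤ #({0, 1, 2, 3, 4} : Finset (Fin 91)) + 9 := Nat.le_of_lt_succ hlt
  have hfalse := search_eq_false hT 91 (by norm_num) hsub (subset_univ T) hle
  rw [search_eq_true] at hfalse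
  contradiction

end Search

section Singer

/-- One step of the recurrence `v (n + 3) = g • v (n + 1) + v n`, on three consecutive terms. -/
def recStep {K V : Type*} [Add V] [SMul K V] (g : K) (t : V × V × V) : V × V × V :=
  (t.2.1, t.2.2, g • t.2.1 + t.1)

/-- The solution of `v (n + 3) = g • v (n + 1) + v n` whose first three terms are `t`. -/
def recSeq {K V : Type*} [Add V] [SMul K V] (g : K) (t : V × V × V) (n : ℕ) : V :=
  ((recStep g)^[n] t).1

theorem recSeq_add {K V : Type*} [Add V] [SMul K V] (g : K) (t : V × V × V) (n k : ℕ) :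
    recSeq g t (n + k) = recSeq g ((recStep g)^[k] t) n := by
  rw [recSeq, Function.iterate_add_apply, recSeq]

theorem recSeq_add_eq_recSeq {K V : Type*} [Add V] [SMul K V] (g : K) (t : V × V × V) (n k : ℕ) :
    recSeq g t (n + k) = recSeq g (recSeq g t k, recSeq g t (k + 1), recSeq g t (k + 2)) n := by
  rw [recSeq_add]
  simp only [recSeq, Function.iterate_succ_apply', recStep]

theorem map_recSeq {K L V W : Type*} [Add V] [SMul K V] [Add W] [SMul L W] {f : V → W} {g : K}
    {h : L} (hadd : ∀ x y, f (x + y) = f x + f y) (hsmul : ∀ x, f (g • x) = h • f x) (a b c : V)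
    (n : ℕ) : f (recSeq g (a, b, c) n) = recSeq h (f a, f b, f c) n := by
  have hstep : Function.Semiconj (Prod.map f (Prod.map f f)) (recStep g) (recStep h) := fun t => by
    simp [recStep, hadd, hsmul]
  exact congrArg Prod.fst (hstep.iterate_right n (a, b, c))

open QuadraticAlgebra

/-- The field with nine elements, as the Gaussian integers modulo `3`. -/
abbrev GaussianThree : Type := QuadraticAlgebra (ZMod 3) (-1) 0

-- This is what makes `QuadraticAlgebra (ZMod 3) (-1) 0` a field.
instance : Fact (∀ r : ZMod 3, r ^ 2 ≠ -1 + 0 * r) := ⟨by decide⟩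

theorem periodic_recSeq_omega :
    (recSeq (ω : GaussianThree) (1, 0, (0 : GaussianThree))).Periodic 91 := by
  have h : (recStep (ω : GaussianThree))^[91] (1, 0, (0 : GaussianThree)) = (1, 0, 0) := by
    decide +kernel
  intro n
  rw [recSeq_add, h]

theorem recSeq_omega_eq_zero_iff (n : ℕ) :
    recSeq (ω : GaussianThree) (1, 0, (0 : GaussianThree)) n = 0 ↔ Fin.ofNat 91 n ∈ diffSet := by
  have h : ∀ x : Fin 91,
      recSeq (ω : GaussianThree) (1, 0, (0 : GaussianThree)) x = 0 ↔ x ∈ diffSet := by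
    decide +kernel
  rw [← periodic_recSeq_omega.map_mod_nat n]
  exact h (Fin.ofNat 91 n)

theorem exists_recSeq_eq_zero_iff {K : Type*} [Field K] [Fintype K] (hcard : Fintype.card K = 9) :
    ∃ g : K, ∀ n : ℕ, recSeq g (1, 0, (0 : K)) n = 0 ↔ Fin.ofNat 91 n ∈ diffSet := by
  let : Fintype GaussianThree := Fintype.ofEquiv _ (equivProd (-1) 0).symm
  have h9 : Fintype.card GaussianThree = 9 := by
    rw [Fintype.ofEquiv_card, Fintype.card_prod, ZMod.card]
  obtain ⟨e⟩ : Nonempty (GaussianThree ≃+* K) :=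
    ⟨FiniteField.ringEquivOfCardEq (h9.trans hcard.symm)⟩
  refine ⟨e ω, fun n => ?_⟩
  have hmap := map_recSeq (g := ω) (h := e ω) (map_add e)
    (fun x => by rw [smul_eq_mul, smul_eq_mul, map_mul]) 1 0 0 n
  rw [map_one, map_zero] at hmap
  rw [← recSeq_omega_eq_zero_iff, ← map_eq_zero_iff e e.injective, ← hmap]
end Singer

section Coordinates

open Matrix Projectivization Configuration Configuration.ofField

/-- The plane subspace of the vectors orthogonal to `w`. -/
def orthogonalSubmodule (w : Fin 3 → F) : Submodule F (Fin 3 → F) :=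
  LinearMap.ker (dotProductEquiv F (Fin 3) w)

theorem mem_orthogonalSubmodule {v w : Fin 3 → F} : v ∈ orthogonalSubmodule w ↔ v ⬝ᵥ w = 0 := by
  rw [dotProduct_comm]
  rfl

theorem finrank_orthogonalSubmodule {w : Fin 3 → F} (hw : w ≠ 0) :
    Module.finrank F (orthogonalSubmodule w) = 2 := by
  have h := Module.Dual.finrank_ker_add_one_of_ne_zero
    ((dotProductEquiv F (Fin 3)).map_ne_zero_iff.2 hw)
  rw [Module.finrank_fin_fun] at h
  exact Nat.succ_injective h

theorem exists_eq_orthogonalSubmodule {L : Submodule F (Fin 3 → F)}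
    (hL : Module.finrank F L = 2) : ∃ w : Fin 3 → F, w ≠ 0 ∧ L = orthogonalSubmodule w := by
  have hlt : L < ⊤ := Submodule.lt_top_of_finrank_lt_finrank (by simp [hL])
  obtain ⟨f, hf, hle⟩ := Submodule.exists_le_ker_of_lt_top L hlt
  obtain ⟨w, rfl⟩ := (dotProductEquiv F (Fin 3)).surjective f
  have hw : w ≠ 0 := (dotProductEquiv F (Fin 3)).map_ne_zero_iff.1 hf
  refine ⟨w, hw, Submodule.eq_of_le_of_finrank_le hle ?_⟩
  rw [hL]
  exact (finrank_orthogonalSubmodule hw).le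

theorem submodule_le_orthogonalSubmodule (p : PGPoint F) {w : Fin 3 → F} (hw : w ≠ 0) :
    p.submodule ≤ orthogonalSubmodule w ↔ p ∈ (mk F w hw : PGPoint F) := by
  induction p using Projectivization.ind with | h v hv =>
  rw [submodule_mk, Submodule.span_singleton_le_iff_mem, mem_orthogonalSubmodule, mem_iff,
    orthogonal_mk]

theorem noTangents_iff [∀ p l : PGPoint F, Decidable (p ∈ l)] (S : Finset (PGPoint F)) :
    NoTangents (S : Set (PGPoint F)) ↔ ∀ l : PGPoint F, #{q ∈ S | q ∈ l} ≠ 1 := by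
  have h {w : Fin 3 → F} (hw : w ≠ 0) : #{q ∈ S | q ∈ (mk F w hw : PGPoint F)} = 1 ↔
      ∃! p, p ∈ (S : Set (PGPoint F)) ∩ pointsOn (orthogonalSubmodule w) := by
    simp only [card_eq_one, singleton_iff_unique_mem, mem_filter, pointsOn, Set.mem_inter_iff,
      mem_coe, Set.mem_ofPred_eq, submodule_le_orthogonalSubmodule _ hw]
  constructor
  · intro hS l
    induction l using Projectivization.ind with | h w hw =>
    exact (h hw).not.2 (hS _ (finrank_orthogonalSubmodule hw))
  · intro hS L hL
    obtain ⟨w, hw, rfl⟩ := exists_eq_orthogonalSubmodule hL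
    exact (h hw).not.1 (hS _)

theorem card_pgPoint [Fintype F] (hcard : Fintype.card F = 9) : Nat.card (PGPoint F) = 91 := by
  rw [card_of_finrank F (Fin 3 → F) (Module.finrank_fin_fun F), Nat.card_eq_fintype_card, hcard]
  decide

theorem order_eq_nine [Fintype F] [DecidableEq F] (hcard : Fintype.card F = 9) :
    ProjectivePlane.order (PGPoint F) (PGPoint F) = 9 := by
  have : Fintype (PGPoint F) := Fintype.ofFinite _
  have h := ProjectivePlane.card_points (PGPoint F) (PGPoint F)
  rw [← Nat.card_eq_fintype_card, card_pgPoint hcard] at h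
  nlinarith

/-- A labelling of the points and lines of the plane over `F` by the integers modulo `91`, with
the incidence of the cyclic plane of `diffSet`. -/
structure CyclicLabelling (F : Type*) [Field F] where
  /-- The point with a given label. -/
  point : Fin 91 ≃ PGPoint F
  /-- The line with a given label, in homogeneous coordinates. -/
  line : Fin 91 ≃ PGPoint F
  mem_iff (x m : Fin 91) : point x ∈ line m ↔ x ∈ cyclicLine m

namespace CyclicLabelling

theorem card_filter_map [∀ p l : PGPoint F, Decidable (p ∈ l)] (σ : CyclicLabelling F)
    (T : Finset (Fin 91)) (m : Fin 91) :
    #{q ∈ T.map σ.point.toEmbedding | q ∈ σ.line m} = #(T ∩ cyclicLine m) := by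
  rw [filter_map, card_map, ← filter_mem_eq_inter]
  simp only [Function.comp_apply, Equiv.coe_toEmbedding, σ.mem_iff]

theorem noTangents_map_iff (σ : CyclicLabelling F) (T : Finset (Fin 91)) :
    NoTangents (T.map σ.point.toEmbedding : Set (PGPoint F)) ↔ ∀ m, #(T ∩ cyclicLine m) ≠ 1 := by
  classical
  simp only [noTangents_iff, ← σ.card_filter_map, σ.line.surjective.forall]

theorem exists_point_eq [Fintype F] (hcard : Fintype.card F = 9) {point line : Fin 91 → PGPoint F}
    (h : ∀ x m, point x ∈ line m ↔ x ∈ cyclicLine m) :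
    ∃ σ : CyclicLabelling F, ⇑σ.point = point := by
  have : Finite (PGPoint F) := Nat.finite_of_card_ne_zero (by simp [card_pgPoint hcard])
  have hcard' : Nat.card (PGPoint F) ≤ Nat.card (Fin 91) := by simp [card_pgPoint hcard]
  have hpoint : Function.Injective point := by
    intro x y hxy
    refine neg_injective (cyclicLine_injective (ext fun m => ?_))
    have := h x (-m)
    rw [hxy, h, mem_cyclicLine, mem_cyclicLine] at this
    simpa [mem_cyclicLine, add_comm] using this.symm
  have hline : Function.Injective line := fun l m hlm =>
    cyclicLine_injective (ext fun x => by rw [← h, hlm, h])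
  exact ⟨⟨.ofBijective point (hpoint.bijective_of_nat_card_le hcard'),
    .ofBijective line (hline.bijective_of_nat_card_le hcard'), h⟩, rfl⟩

end CyclicLabelling

theorem exists_dotProduct_eq_recSeq (g : F) {a b c : Fin 3 → F}
    (h : LinearIndependent F ![a, b, c]) (k : ℕ) :
    ∃ w, ∀ n, recSeq g (a, b, c) n ⬝ᵥ w = recSeq g (1, 0, (0 : F)) (n + k) := by
  let B := basisOfLinearIndependentOfCardEqFinrank h (by simp)
  let s := recSeq g (1, 0, (0 : F))
  obtain ⟨w, hw⟩ :=
    (dotProductEquiv F (Fin 3)).surjective (B.constr F ![s k, s (k + 1), s (k + 2)])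
  have hdot (i : Fin 3) : ![a, b, c] i ⬝ᵥ w = ![s k, s (k + 1), s (k + 2)] i := by
    have := B.constr_basis F ![s k, s (k + 1), s (k + 2)] i
    rwa [← hw, coe_basisOfLinearIndependentOfCardEqFinrank, dotProductEquiv_apply_apply,
      dotProduct_comm] at this
  refine ⟨w, fun n => ?_⟩
  rw [recSeq_add_eq_recSeq, map_recSeq (f := (· ⬝ᵥ w)) (h := g) (fun x y => add_dotProduct x y w)
    (fun x => smul_dotProduct g x w), show a ⬝ᵥ w = s k from hdot 0,
    show b ⬝ᵥ w = s (k + 1) from hdot 1, show c ⬝ᵥ w = s (k + 2) from hdot 2]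

theorem exists_cyclicLabelling [Fintype F] (hcard : Fintype.card F = 9) {g : F}
    (hg : ∀ n : ℕ, recSeq g (1, 0, (0 : F)) n = 0 ↔ Fin.ofNat 91 n ∈ diffSet)
    {a b c : Fin 3 → F} (h : LinearIndependent F ![a, b, c]) :
    ∃ σ : CyclicLabelling F, ∀ (x : Fin 91) (hx : recSeq g (a, b, c) x ≠ 0),
      σ.point x = mk F (recSeq g (a, b, c) x) hx := by
  choose w hw using exists_dotProduct_eq_recSeq g h
  have hne (k : ℕ) : recSeq g (1, 0, (0 : F)) (90 * k + k) ≠ 0 := by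
    rw [ne_eq, hg, show Fin.ofNat 91 (90 * k + k) = 0 from Fin.ext (by simp [← Nat.succ_mul])]
    decide
  have hv (n : ℕ) : recSeq g (a, b, c) n ≠ 0 := fun h0 => hne n (by
    rw [add_comm, ← hw, h0, zero_dotProduct])
  have hw0 (k : ℕ) : w k ≠ 0 := fun h0 => hne k (by rw [← hw, h0, dotProduct_zero])
  obtain ⟨σ, hσ⟩ := CyclicLabelling.exists_point_eq hcard
    (point := fun x => mk F (recSeq g (a, b, c) x) (hv x))
    (line := fun m => mk F (w (-m : Fin 91)) (hw0 _)) fun x m => by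
      rw [mem_iff, orthogonal_mk, hw, hg, mem_cyclicLine, sub_eq_add_neg]
      rfl
  exact ⟨σ, fun x _ => congrFun hσ x⟩

theorem ne_zero_of_recSeq_eq_zero_iff {g : F}
    (hg : ∀ n : ℕ, recSeq g (1, 0, (0 : F)) n = 0 ↔ Fin.ofNat 91 n ∈ diffSet) : g ≠ 0 := by
  rintro rfl
  have := (hg 5).1 (by simp [recSeq, recStep])
  revert this
  decide

theorem linearIndependent_of_two_lines {a b c l m : Fin 3 → F} (hb : b ≠ 0)
    (hal : a ⬝ᵥ l = 0) (hbl : b ⬝ᵥ l = 0) (hcl : c ⬝ᵥ l ≠ 0)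
    (ham : a ⬝ᵥ m ≠ 0) (hbm : b ⬝ᵥ m = 0) (hcm : c ⬝ᵥ m = 0) :
    LinearIndependent F ![a, b, c] := by
  refine Fintype.linearIndependent_iff.2 fun x hx => ?_
  rw [Fin.sum_univ_three] at hx
  have hdot (w : Fin 3 → F) : x 0 * (a ⬝ᵥ w) + x 1 * (b ⬝ᵥ w) + x 2 * (c ⬝ᵥ w) = 0 := by
    simpa [add_dotProduct] using congrArg (· ⬝ᵥ w) hx
  have hx2 : x 2 = 0 := by simpa [hal, hbl, hcl] using hdot l
  have hx0 : x 0 = 0 := by simpa [ham, hbm, hcm] using hdot m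
  have hx1 : x 1 = 0 := by simpa [hx0, hx2, hb] using hx
  exact Fin.forall_fin_succ.2 ⟨hx0, Fin.forall_fin_two.2 ⟨hx1, hx2⟩⟩

theorem exists_mk_smul_add_eq {V : Type*} [AddCommGroup V] [Module F V] {g : F} (hg : g ≠ 0)
    {b : V} (hb : b ≠ 0) {q r : Projectivization F V} (hq : q ≠ mk F b hb) (hrb : r ≠ mk F b hb)
    (hrq : r ≠ q) (hle : r.submodule ≤ (mk F b hb).submodule ⊔ q.submodule) :
    ∃ (a : V) (ha : a ≠ 0) (h : g • b + a ≠ 0), mk F a ha = q ∧ mk F (g • b + a) h = r := by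
  induction q using Projectivization.ind with | h q hq0 =>
  induction r using Projectivization.ind with | h r hr0 =>
  simp only [submodule_mk] at hle
  obtain ⟨α, β, hr⟩ : ∃ α β : F, α • b + β • q = r := by
    rw [← Submodule.span_insert, Submodule.span_singleton_le_iff_mem] at hle
    exact Submodule.mem_span_pair.1 hle
  have hα : α ≠ 0 := by
    rintro rfl
    exact hrq ((mk_eq_mk_iff' F _ _ _ _).2 ⟨β, by simpa using hr⟩)
  have hβ : β ≠ 0 := by
    rintro rfl
    exact hrb ((mk_eq_mk_iff' F _ _ _ _).2 ⟨α, by simpa using hr⟩)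
  have hsum : g • b + (g / α * β) • q = (g / α) • r := by
    rw [← hr, smul_add, smul_smul, smul_smul, div_mul_cancel₀ g hα]
  refine ⟨(g / α * β) • q, by simp [*], hsum ▸ by simp [*], ?_, ?_⟩
  · exact (mk_eq_mk_iff' F _ _ _ _).2 ⟨_, rfl⟩
  · exact (mk_eq_mk_iff' F _ _ _ _).2 ⟨_, hsum.symm⟩

theorem submodule_le_sup {p q r l : PGPoint F} (hpq : p ≠ q) (hp : p ∈ l) (hq : q ∈ l)
    (hr : r ∈ l) : r.submodule ≤ p.submodule ⊔ q.submodule := by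
  induction l using Projectivization.ind with | h l hl =>
  rw [← submodule_le_orthogonalSubmodule _ hl] at hp hq hr
  have hdis : p.submodule ⊓ q.submodule = ⊥ :=
    ((independent_iff_iSupIndep.1 ((independent_pair_iff_ne p q).2 hpq)).pairwiseDisjoint
      zero_ne_one).eq_bot
  have hsup : p.submodule ⊔ q.submodule = orthogonalSubmodule l := by
    refine Submodule.eq_of_le_of_finrank_le (sup_le hp hq) ?_
    have := Submodule.finrank_sup_add_finrank_inf_eq p.submodule q.submodule
    rw [hdis, finrank_bot, finrank_submodule, finrank_submodule] at this
    rw [finrank_orthogonalSubmodule hl]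
    omega
  exact hsup ▸ hr

theorem exists_frame {g : F} (hg : g ≠ 0) {p q r s t l m : PGPoint F} (hlm : l ≠ m)
    (hpl : p ∈ l) (hql : q ∈ l) (hrl : r ∈ l) (hpm : p ∈ m) (hsm : s ∈ m) (htm : t ∈ m)
    (hqp : q ≠ p) (hrp : r ≠ p) (hrq : r ≠ q) (hsp : s ≠ p) (htp : t ≠ p) (hts : t ≠ s) :
    ∃ a b c, LinearIndependent F ![a, b, c] ∧ ∀ n < 5, ∃ h : recSeq g (a, b, c) n ≠ 0,
      mk F _ h ∈ ({p, q, r, s, t} : Set (PGPoint F)) := by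
  induction p using Projectivization.ind with | h b hb =>
  obtain ⟨a, ha, har, rfl, rfl⟩ :=
    exists_mk_smul_add_eq hg hb hqp hrp hrq (submodule_le_sup hqp.symm hpl hql hrl)
  obtain ⟨c, hc, hct, rfl, rfl⟩ := exists_mk_smul_add_eq (inv_ne_zero hg) hb hsp htp hts
    (submodule_le_sup hsp.symm hpm hsm htm)
  have hsum : g • (g⁻¹ • b + c) = g • c + b := by
    rw [smul_add, smul_inv_smul₀ hg, add_comm]
  have hgc : g • c + b ≠ 0 := hsum ▸ smul_ne_zero hg hct
  have ham : mk F a ha ∉ m := fun h =>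
    (Nondegenerate.eq_or_eq hpl hql hpm h).elim hqp.symm hlm
  have hcl : mk F c hc ∉ l := fun h =>
    (Nondegenerate.eq_or_eq hpm hsm hpl h).elim hsp.symm hlm.symm
  induction l using Projectivization.ind with | h l hl =>
  induction m using Projectivization.ind with | h m hm =>
  rw [mem_iff, orthogonal_mk] at hpl hql hpm hsm ham hcl
  refine ⟨a, b, c, linearIndependent_of_two_lines hb hql hpl hcl ham hpm hsm, ?_⟩
  have hmk : mk F (g • c + b) hgc = mk F (g⁻¹ • b + c) hct :=
    (mk_eq_mk_iff' F _ _ _ _).2 ⟨g, hsum⟩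
  intro n hn
  interval_cases n
  · exact ⟨ha, by simp [recSeq]⟩
  · exact ⟨hb, by simp [recSeq, recStep]⟩
  · exact ⟨hc, by simp [recSeq, recStep]⟩
  · exact ⟨har, by simp [recSeq, recStep]⟩
  · exact ⟨hgc, by simp [recSeq, recStep, hmk]⟩

theorem exists_ne_of_three_le_card {α : Type*} {T : Finset α} {p : α} (hp : p ∈ T)
    (hT : 3 ≤ #T) : ∃ q ∈ T, ∃ r ∈ T, q ≠ p ∧ r ≠ p ∧ r ≠ q := by
  classical
  have hlt : 1 < #(T.erase p) := by
    rw [card_erase_of_mem hp]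
    omega
  obtain ⟨q, hq, r, hr, hqr⟩ := one_lt_card.1 hlt
  rw [mem_erase] at hq hr
  exact ⟨q, hq.2, r, hr.2, hq.1, hr.1, hqr.symm⟩

theorem exists_cyclicLabelling_of_long_secants [Fintype F] (hcard : Fintype.card F = 9)
    [∀ p l : PGPoint F, Decidable (p ∈ l)] {S : Finset (PGPoint F)} {p l m : PGPoint F}
    (hp : p ∈ S) (hlm : l ≠ m) (hpl : p ∈ l) (hpm : p ∈ m) (hl : 3 ≤ #{q ∈ S | q ∈ l})
    (hm : 3 ≤ #{q ∈ S | q ∈ m}) :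
    ∃ σ : CyclicLabelling F, ∀ x ∈ ({0, 1, 2, 3, 4} : Finset (Fin 91)), σ.point x ∈ S := by
  classical
  obtain ⟨g, hg⟩ := exists_recSeq_eq_zero_iff hcard
  obtain ⟨q, hq, r, hr, hqp, hrp, hrq⟩ :=
    exists_ne_of_three_le_card (mem_filter.2 ⟨hp, hpl⟩) hl
  obtain ⟨s, hs, t, ht, hsp, htp, hts⟩ :=
    exists_ne_of_three_le_card (mem_filter.2 ⟨hp, hpm⟩) hm
  rw [mem_filter] at hq hr hs ht
  obtain ⟨a, b, c, hind, habc⟩ := exists_frame (ne_zero_of_recSeq_eq_zero_iff hg) hlm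
    hpl hq.2 hr.2 hpm hs.2 ht.2 hqp hrp hrq hsp htp hts
  obtain ⟨σ, hσ⟩ := exists_cyclicLabelling hcard hg hind
  refine ⟨σ, fun x hx => ?_⟩
  have hx5 : (x : ℕ) < 5 := by
    revert x
    decide
  obtain ⟨h, hmem⟩ := habc x hx5
  rw [hσ x h]
  have hsub : ({p, q, r, s, t} : Set (PGPoint F)) ⊆ S := by
    simp [Set.insert_subset_iff, hp, hq.1, hr.1, hs.1, ht.1]
  exact hsub hmem

end Coordinates

section Bounds

/-- A set without tangents in the cyclic plane: the orbits of `1`, `7`, `14` and `28` under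
multiplication by `3`. -/
def tangentFreeSet : Finset (Fin 91) :=
  {1, 3, 9, 27, 81, 61, 7, 21, 63, 14, 42, 35, 28, 84, 70}

theorem card_tangentFreeSet_inter_cyclicLine : ∀ m, #(tangentFreeSet ∩ cyclicLine m) ≠ 1 := by
  decide +kernel

theorem exists_noTangents_ncard_eq_fifteen [Fintype F] (hcard : Fintype.card F = 9) :
    ∃ S : Set (PGPoint F), NoTangents S ∧ S.ncard = 15 := by
  obtain ⟨g, hg⟩ := exists_recSeq_eq_zero_iff hcard
  let B := Pi.basisFun F (Fin 3)
  have hB : ![B 0, B 1, B 2] = B := FinVec.etaExpand_eq B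
  obtain ⟨σ, -⟩ := exists_cyclicLabelling hcard hg (hB ▸ B.linearIndependent)
  refine ⟨_, (σ.noTangents_map_iff tangentFreeSet).2 card_tangentFreeSet_inter_cyclicLine, ?_⟩
  rw [Set.ncard_coe_finset, card_map]
  rfl

theorem fifteen_le_card_of_noTangents [Fintype F] (hcard : Fintype.card F = 9)
    {S : Finset (PGPoint F)} (hne : S.Nonempty) (hS : NoTangents (S : Set (PGPoint F))) :
    15 ≤ #S := by
  classical
  have horder := order_eq_nine hcard
  by_contra! hlt
  obtain ⟨p, hp, l, m, hlm, hpl, hpm, hl, hm⟩ :=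
    exists_two_long_secants (by rw [horder]; decide) hne ((noTangents_iff S).1 hS) (by omega)
  obtain ⟨σ, hσ⟩ := exists_cyclicLabelling_of_long_secants hcard hp hlm hpl hpm hl hm
  obtain ⟨T, rfl⟩ : ∃ T : Finset (Fin 91), T.map σ.point.toEmbedding = S :=
    ⟨S.map σ.point.symm.toEmbedding, by simp [map_map]⟩
  simp only [mem_map_equiv, Equiv.symm_apply_apply] at hσ
  rw [card_map] at hlt
  exact hlt.not_ge (fifteen_le_card_of_subset ((σ.noTangents_map_iff T).1 hS) hσ)

end Bounds

end TangentFree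

/-- the smallest non-empty set without tangents in `PG(2,9)` has
exactly 15 points. -/
theorem stmt_18 [Fintype F] (hcard : Fintype.card F = 9) :
    (∃ S : Set (PGPoint F), NoTangents S ∧ S.ncard = 15) ∧
      ∀ S : Set (PGPoint F), S.Nonempty → NoTangents S → 15 ≤ S.ncard := by
  refine ⟨TangentFree.exists_noTangents_ncard_eq_fifteen hcard, fun S hne hS => ?_⟩
  lift S to Finset (PGPoint F) using S.toFinite
  rw [Set.ncard_coe_finset]
  exact TangentFree.fifteen_le_card_of_noTangents hcard (Finset.coe_nonempty.1 hne) hS
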